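/- Let 𝒞 = {𝓛₁, 𝓛₂} be a pseudo-fibered pair and let G be a nontrivial subgroup of Aut(𝒞). Suppose G preserves a good open interval I (g(I) = I for all g ∈ G) and the action of G on I is free (no nontrivial element of G fixes any point of I). Then G is infinite cyclic, generated by an element g with no fixed point in I. -/

import Mathlib

/-!
Parametrize `I` by a real interval `(μ, ν)`, so that `G` acts on it freely by increasing
homeomorphisms. As in Hölder's theorem, every element moving one point up moves all points up, and
its orbits are unbounded towards both ends of `I`. If `G` has a least positive element, that
element generates `G`. Otherwise some `l ∈ I` is a limit from above of every `G`-orbit in `I`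
(`FreeOrderAction.cyclic_or_common_limit`); it remains to exclude this case.

Each of the two lamination systems has a leaf with one endpoint in `I` and the other one outside
(`Acts.exists_crossing`). If it had none, the maximal elements contained in `I` (other than `I`
itself) or in `I*` would form a gap (`exists_gap`). Some of them lie in `I`, because endpoints of a
quite full lamination system are dense (`exists_endpoint`). Unlinkedness makes the whole orbit of an
endpoint in `I` of such an element consist of vertices of that gap, and this orbit accumulates at
both ends of `I`. Then the gap is not an ideal polygon. It is not a crown either: both ends of `I`
are vertices, so one of them is a tip, and a side of the crown adjacent to this tip would contain
points of the orbit.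

Let `a ∈ I` be the inner endpoint of a crossing leaf. There are translates of `a` decreasing to
`l`; the corresponding translates of the leaf are unlinked, hence nested, and their union is an
element with endpoint `l` (`Acts.mem_E_of_crossing`). Thus `l` is an endpoint of leaves of both
systems, contradicting strong transversality.
-/

open Set Filter Topology

namespace Veering

/-- The circle `S¹`: the unit additive circle `ℝ / ℤ`, with its standard
circular order (`sbtw x y z` means the triple `(x,y,z)` is counterclockwise)
and its standard topology. -/
abbrev S1 : Type := UnitAddCircle

/-- A good open interval in `S¹`, recorded by its ordered pair of distinct
endpoints; its carrier is the set of points strictly counterclockwise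
between them. -/
structure GoodInt : Type where
  a : S1
  b : S1
  ne : a ≠ b

namespace GoodInt

/-- The set of points of the good open interval `(a, b)`. -/
def carrier (I : GoodInt) : Set S1 := {z : S1 | sbtw I.a z I.b}

/-- The dual good interval `(u,v)* = (v,u)`. -/
def dual (I : GoodInt) : GoodInt := ⟨I.b, I.a, I.ne.symm⟩

/-- The vertex set `v(ℓ(I)) = {a, b}` of the leaf determined by `I`. -/
def verts (I : GoodInt) : Set S1 := {I.a, I.b}

end GoodInt

/-- `I` and `J` represent the same leaf `ℓ(I) = {I, I*}`. -/
def SameLeaf (I J : GoodInt) : Prop := J = I ∨ J = I.dual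

/-- A lamination system: a nonempty collection of good open intervals, closed
under duals, pairwise unlinked, and closed under unions of ascending chains
(when these unions are good intervals). -/
structure LamSys : Type where
  mem : Set GoodInt
  nonempty : mem.Nonempty
  dual_mem : ∀ I ∈ mem, GoodInt.dual I ∈ mem
  unlinked : ∀ I ∈ mem, ∀ J ∈ mem,
      I.carrier ⊆ J.carrier ∨ I.dual.carrier ⊆ J.carrier ∨
      I.carrier ⊆ J.dual.carrier ∨ I.dual.carrier ⊆ J.dual.carrier
  chain_closed : ∀ c : ℕ → GoodInt, (∀ n, c n ∈ mem) →
      (∀ n, (c n).carrier ⊆ (c (n + 1)).carrier) →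
      ∀ J : GoodInt, J.carrier = ⋃ n, (c n).carrier → J ∈ mem

namespace LamSys

/-- The endpoint set `E(𝓛)`: the union of the vertex sets of all leaves. -/
def E (L : LamSys) : Set S1 := ⋃ I ∈ L.mem, I.verts

/-- A gap of `L`: a set of pairwise disjoint elements of `L` such that every
leaf of `L` lies on one of them. -/
def IsGap (L : LamSys) (G : Set GoodInt) : Prop :=
  G ⊆ L.mem ∧
  (∀ I ∈ G, ∀ J ∈ G, I ≠ J → Disjoint I.carrier J.carrier) ∧
  (∀ I ∈ L.mem, ∃ J ∈ G, I.carrier ⊆ J.carrier ∨ I.dual.carrier ⊆ J.carrier)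

end LamSys

/-- The vertex set `v(𝒢) = S¹ \ ⋃ 𝒢` of a gap. -/
def gapVerts (G : Set GoodInt) : Set S1 := (⋃ I ∈ G, I.carrier)ᶜ

/-- `t` is a tip of `G`: an isolated point of the vertex set of `G`. -/
def IsTipOf (t : S1) (G : Set GoodInt) : Prop :=
  t ∈ gapVerts G ∧ t ∉ closure (gapVerts G \ {t})

/-- A gap that is itself a leaf `{I, I*}`. -/
def IsLeafGap (G : Set GoodInt) : Prop := ∃ I : GoodInt, G = {I, I.dual}

/-- `G` is a crown with tip sequence `t : ℤ → S¹` and pivot `p`. -/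
def IsCrownWith (G : Set GoodInt) (t : ℤ → S1) (p : S1) : Prop :=
  (∀ k, p ≠ t k) ∧ (∀ k, t k ≠ t (k + 1)) ∧
  G = {I : GoodInt | ∃ k : ℤ, I.a = t k ∧ I.b = t (k + 1)} ∧
  gapVerts G = Set.range t ∪ {p}

/-- `G` is a crown. -/
def IsCrown (G : Set GoodInt) : Prop := ∃ t p, IsCrownWith G t p

/-- `p` is the pivot of the crown `G`. -/
def IsPivotOf (p : S1) (G : Set GoodInt) : Prop := ∃ t, IsCrownWith G t p

/-- A lamination system is quite full if every gap is an ideal polygon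
(finitely many vertices) or a crown. -/
def LamSys.QuiteFull (L : LamSys) : Prop :=
  ∀ G : Set GoodInt, L.IsGap G → (gapVerts G).Finite ∨ IsCrown G

/-- `p` is a rainbow point of `L`: there is a strictly descending sequence of
elements of `L` whose intersection is `{p}`. -/
def LamSys.IsRainbowPt (L : LamSys) (p : S1) : Prop :=
  ∃ I : ℕ → GoodInt, (∀ n, I n ∈ L.mem) ∧
    (∀ n, (I (n + 1)).carrier ⊂ (I n).carrier) ∧ (⋂ n, (I n).carrier) = {p}

/-- `L` is loose: distinct non-leaf gaps have disjoint vertex sets. -/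
def LamSys.Loose (L : LamSys) : Prop :=
  ∀ G H : Set GoodInt, L.IsGap G → L.IsGap H → ¬ IsLeafGap G → ¬ IsLeafGap H →
    G ≠ H → Disjoint (gapVerts G) (gapVerts H)

/-- The sequence of leaves represented by `c` converges to the good
interval `J`. -/
def SeqConv (c : ℕ → GoodInt) (J : GoodInt) : Prop :=
  ∃ d : ℕ → GoodInt, (∀ n, SameLeaf (c n) (d n)) ∧
    J.carrier ⊆ Filter.liminf (fun n => (d n).carrier) Filter.atTop ∧
    Filter.limsup (fun n => (d n).carrier) Filter.atTop ⊆ closure J.carrier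

/-- `I ∈ L` admits an `I`-side sequence: a sequence of leaves of `L`, each
distinct from `ℓ(I)` and lying on `I`, converging to `I`.  (`I` is isolated
precisely when this fails.) -/
def LamSys.HasSideSeq (L : LamSys) (I : GoodInt) : Prop :=
  ∃ c : ℕ → GoodInt, (∀ n, c n ∈ L.mem) ∧ (∀ n, ¬ SameLeaf I (c n)) ∧
    (∀ n, (c n).carrier ⊆ I.carrier ∨ (c n).dual.carrier ⊆ I.carrier) ∧
    SeqConv c I

/-- `L` is totally disconnected: every distinct pair is separated by a
non-leaf gap. -/
def LamSys.TotDisc (L : LamSys) : Prop :=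
  ∀ I ∈ L.mem, ∀ J ∈ L.mem, I.carrier ⊂ J.dual.carrier →
    ∃ G : Set GoodInt, L.IsGap G ∧ ¬ IsLeafGap G ∧
      ∃ M ∈ G, ∃ N ∈ G, I.carrier ⊆ M.carrier ∧ J.carrier ⊆ N.carrier

/-- Gaps `G1` and `G2` interleave: every element of each contains exactly one
vertex of the other. -/
def Interleave (G1 G2 : Set GoodInt) : Prop :=
  (∀ I ∈ G1, ∃! x : S1, x ∈ I.carrier ∩ gapVerts G2) ∧
  (∀ I ∈ G2, ∃! x : S1, x ∈ I.carrier ∩ gapVerts G1)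

/-- A pseudo-fibered pair: two quite full, loose, strongly transverse
lamination systems. -/
structure PseudoFibered (L1 L2 : LamSys) : Prop where
  qf1 : L1.QuiteFull
  qf2 : L2.QuiteFull
  loose1 : L1.Loose
  loose2 : L2.Loose
  transverse : L1.E ∩ L2.E = ∅

/-- A veering pair: a pseudo-fibered pair in which every non-leaf gap of one
system admits an interleaving gap in the other. -/
structure VeeringPair (L1 L2 : LamSys) extends PseudoFibered L1 L2 : Prop where
  inter1 : ∀ G : Set GoodInt, L1.IsGap G → ¬ IsLeafGap G →
    ∃ H : Set GoodInt, L2.IsGap H ∧ Interleave G H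
  inter2 : ∀ G : Set GoodInt, L2.IsGap G → ¬ IsLeafGap G →
    ∃ H : Set GoodInt, L1.IsGap H ∧ Interleave G H

/-- An orientation-preserving homeomorphism of the circle: a bijection of
`S¹` which together with its inverse is continuous, and which preserves the
counterclockwise circular order. -/
def PosHomeo (g : Equiv.Perm S1) : Prop :=
  Continuous ⇑g ∧ Continuous ⇑g.symm ∧
  ∀ x y z : S1, sbtw x y z → sbtw (g x) (g y) (g z)

/-- `g ∈ Aut(𝓛)`: an orientation-preserving homeomorphism of `S¹` mapping each
element of `𝓛` to an element of `𝓛`. -/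
def LamSys.InAut (L : LamSys) (g : Equiv.Perm S1) : Prop :=
  PosHomeo g ∧ ∀ I ∈ L.mem, ∃ J ∈ L.mem, J.carrier = ⇑g '' I.carrier

/-- `g` maps the gap `G` onto itself. -/
def MapsGapOnto (g : Equiv.Perm S1) (G : Set GoodInt) : Prop :=
  (∀ I ∈ G, ∃ J ∈ G, J.carrier = ⇑g '' I.carrier) ∧
  (∀ J ∈ G, ∃ I ∈ G, J.carrier = ⇑g '' I.carrier)

/-- The fixed point set of `g` on `S¹`. -/
def FixSet (g : Equiv.Perm S1) : Set S1 := {x : S1 | g x = x}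

/-- The set of periodic points of `g` on `S¹`. -/
def PerSet (g : Equiv.Perm S1) : Set S1 := {x : S1 | ∃ n : ℕ, 0 < n ∧ (g ^ n) x = x}

/-- `p` is an attracting fixed point of `g`. -/
def IsAttractingFix (g : Equiv.Perm S1) (p : S1) : Prop :=
  g p = p ∧ ∃ I : GoodInt, I.carrier ∩ FixSet g = {p} ∧
    ⇑g '' closure I.carrier ⊆ I.carrier

/-- `p` is a repelling fixed point of `g`. -/
def IsRepellingFix (g : Equiv.Perm S1) (p : S1) : Prop :=
  g p = p ∧ ∃ I : GoodInt, I.carrier ∩ FixSet g = {p} ∧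
    I.carrier ⊆ ⇑g '' closure I.carrier

/-- `g` is elliptic: nontrivial of finite order. -/
def Elliptic (g : Equiv.Perm S1) : Prop := g ≠ 1 ∧ IsOfFinOrder g

/-- `g` is parabolic: it has exactly one fixed point. -/
def Parabolic (g : Equiv.Perm S1) : Prop := ∃! x : S1, g x = x

/-- `g` is hyperbolic: exactly two fixed points, one attracting and one
repelling. -/
def Hyperbolic (g : Equiv.Perm S1) : Prop :=
  ∃ a b : S1, a ≠ b ∧ FixSet g = {a, b} ∧ IsAttractingFix g a ∧ IsRepellingFix g b

/-- `g` is pseudo-Anosov-like for the pair `(L1, L2)`: nontrivial, neither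
elliptic nor parabolic, and preserving both gaps of some interleaving pair. -/
def PAlike (L1 L2 : LamSys) (g : Equiv.Perm S1) : Prop :=
  g ≠ 1 ∧ ¬ Elliptic g ∧ ¬ Parabolic g ∧
  ∃ G1 G2 : Set GoodInt, L1.IsGap G1 ∧ L2.IsGap G2 ∧ Interleave G1 G2 ∧
    MapsGapOnto g G1 ∧ MapsGapOnto g G2

/-- `g` is properly pseudo-Anosov: pA-like with nonempty fixed point set. -/
def ProperlyPA (L1 L2 : LamSys) (g : Equiv.Perm S1) : Prop :=
  PAlike L1 L2 g ∧ (FixSet g).Nonempty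

/-- Two leaves are linked: each of the two complementary components of the
vertex set of one contains a vertex of the other. -/
def LeavesLinked (I J : GoodInt) : Prop :=
  (I.carrier ∩ J.verts).Nonempty ∧ (I.dual.carrier ∩ J.verts).Nonempty

/-- Two gaps are linked: they contain a linked pair of boundary leaves. -/
def GapsLinked (G1 G2 : Set GoodInt) : Prop :=
  ∃ I1 ∈ G1, ∃ I2 ∈ G2, LeavesLinked I1 I2

/-- Gaps `G1`, `G2` cross: there are distinct pairs `{I₁, J₁} ⊆ G1`,
`{I₂, J₂} ⊆ G2` such that for each `i`, the vertex set of the other gap is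
contained in `Iᵢ ∪ Jᵢ` and meets `Iᵢ` in exactly one point. -/
def GapsCross (G1 G2 : Set GoodInt) : Prop :=
  ∃ I1 ∈ G1, ∃ J1 ∈ G1, ∃ I2 ∈ G2, ∃ J2 ∈ G2,
    I1.carrier ⊂ J1.dual.carrier ∧ I2.carrier ⊂ J2.dual.carrier ∧
    gapVerts G2 ⊆ I1.carrier ∪ J1.carrier ∧
    (∃! x : S1, x ∈ I1.carrier ∩ gapVerts G2) ∧
    gapVerts G1 ⊆ I2.carrier ∪ J2.carrier ∧
    (∃! x : S1, x ∈ I2.carrier ∩ gapVerts G1)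

/-- The Baumslag–Solitar group `BS(m,n) = ⟨a, b | b aᵐ b⁻¹ = aⁿ⟩`,
with `a = FreeGroup.of false` and `b = FreeGroup.of true`. -/
abbrev BSGroup (m n : ℤ) : Type :=
  PresentedGroup
    ({FreeGroup.of true * FreeGroup.of false ^ m * (FreeGroup.of true)⁻¹ *
        (FreeGroup.of false ^ n)⁻¹} : Set (FreeGroup Bool))

/-! ### Arcs of the circle in real coordinates -/

/-- For real numbers `α < β < α + 1`, the points strictly counterclockwise between the classes of
`α` and `β` are the classes of the reals in `(α, β)`. -/
lemma sbtw_coe_iff {α β : ℝ} (h1 : α < β) (h2 : β < α + 1) (z : S1) :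
    sbtw (α : S1) z (β : S1) ↔ ∃ t ∈ Ioo α β, (t : S1) = z := by
  have hin : ∀ t ∈ Ico α (α + 1), sbtw (α : S1) (t : S1) (β : S1) ↔ t ∈ Ioo α β := by
    intro t ht
    rw [sbtw_iff_not_btw]
    have hb := @QuotientAddGroup.btw_coe_iff ℝ _ _ _ _ 1 _ β t α
    have e1 : toIocMod (Fact.out : (0:ℝ) < 1) β α = α + 1 := by
      rw [toIocMod_eq_iff]
      refine ⟨⟨h2, by linarith⟩, -1, by simp⟩
    rw [e1] at hb
    refine (not_congr hb).trans ?_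
    by_cases htb : β ≤ t
    · have e2 : toIcoMod (Fact.out : (0:ℝ) < 1) β t = t := by
        rw [toIcoMod_eq_self]; exact ⟨htb, by linarith [ht.2]⟩
      rw [e2]
      constructor
      · intro h; exact absurd ht.2.le h
      · intro h; exact absurd h.2 (not_lt.2 htb)
    · have e2 : toIcoMod (Fact.out : (0:ℝ) < 1) β t = t + 1 := by
        rw [toIcoMod_eq_iff]
        push Not at htb
        exact ⟨⟨by linarith [ht.1], by linarith⟩, -1, by simp⟩
      rw [e2]
      push Not at htb
      constructor
      · intro h; exact ⟨by by_contra h'; exact h (by linarith), htb⟩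
      · intro h h'; linarith [h.1]
  have hz : ((AddCircle.equivIco 1 α z : ℝ) : S1) = z := AddCircle.coe_equivIco
  constructor
  · intro h
    refine ⟨(AddCircle.equivIco 1 α z : ℝ), ?_, hz⟩
    rw [← hin _ (AddCircle.equivIco 1 α z).2, hz]
    exact h
  · rintro ⟨t, ht, rfl⟩
    exact (hin t ⟨ht.1.le, by linarith [ht.2]⟩).2 ht

lemma carrier_eq {K : GoodInt} {α β : ℝ} (ha : K.a = (α : S1)) (hb : K.b = (β : S1))
    (h1 : α < β) (h2 : β < α + 1) : K.carrier = (fun t : ℝ => (t : S1)) '' Ioo α β := by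
  ext z
  simp only [GoodInt.carrier, mem_ofPred_eq, ha, hb, sbtw_coe_iff h1 h2, mem_image]

lemma coe_inj_Ico {μ s t : ℝ} (hs : s ∈ Ico μ (μ + 1)) (ht : t ∈ Ico μ (μ + 1))
    (h : (s : S1) = (t : S1)) : s = t :=
  (AddCircle.coe_eq_coe_iff_of_mem_Ico hs ht).1 h

lemma coe_add_one (t : ℝ) : ((t + 1 : ℝ) : S1) = (t : S1) :=
  AddCircle.coe_add_period (1 : ℝ) t

/-- Inside the fundamental domain `[μ, μ + 1]`, membership in an arc can be read off in `ℝ`. -/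
lemma coe_mem_image {μ α β t : ℝ} (h1 : μ ≤ α) (h2 : β ≤ μ + 1) (ht : t ∈ Icc μ (μ + 1)) :
    (t : S1) ∈ (fun t : ℝ => (t : S1)) '' Ioo α β ↔ t ∈ Ioo α β := by
  constructor
  · rintro ⟨s, hs, hst⟩
    have hst : (s : S1) = (t : S1) := hst
    rcases ht.2.lt_or_eq with h | h
    · have := coe_inj_Ico (μ := μ) ⟨by linarith [hs.1], by linarith [hs.2]⟩ ⟨ht.1, h⟩ hst
      rwa [← this]
    · rw [h, coe_add_one] at hst
      have := coe_inj_Ico (μ := μ) ⟨by linarith [hs.1], by linarith [hs.2]⟩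
        ⟨le_rfl, by linarith⟩ hst
      linarith [hs.1]
  · intro h; exact ⟨t, h, rfl⟩

lemma exists_rep (μ : ℝ) (z : S1) : ∃ t ∈ Ico μ (μ + 1), (t : S1) = z :=
  ⟨_, (AddCircle.equivIco 1 μ z).2, AddCircle.coe_equivIco⟩

/-- A good interval avoiding the base point `μ` is a subinterval of the fundamental domain
`[μ, μ + 1]`. -/
lemma exists_coords (μ : ℝ) (K : GoodInt) (h : (μ : S1) ∉ K.carrier) :
    ∃ α β : ℝ, μ ≤ α ∧ α < β ∧ β ≤ μ + 1 ∧ β < α + 1 ∧ K.a = (α : S1) ∧ K.b = (β : S1) := by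
  obtain ⟨α, hα, ha⟩ := exists_rep μ K.a
  obtain ⟨β, hβ, hb⟩ := exists_rep α K.b
  have hne : α ≠ β := by
    rintro rfl; exact K.ne (ha.symm.trans hb)
  have hlt : α < β := lt_of_le_of_ne hβ.1 hne
  refine ⟨α, β, hα.1, hlt, ?_, hβ.2, ha.symm, hb.symm⟩
  by_contra hc
  push Not at hc
  apply h
  rw [carrier_eq ha.symm hb.symm hlt hβ.2]
  exact ⟨μ + 1, ⟨hα.2, hc⟩, coe_add_one μ⟩

lemma exists_coords_self (K : GoodInt) :
    ∃ α β : ℝ, α < β ∧ β < α + 1 ∧ K.a = (α : S1) ∧ K.b = (β : S1) := by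
  obtain ⟨α, hα, ha⟩ := exists_rep 0 K.a
  obtain ⟨β, hβ, hb⟩ := exists_rep α K.b
  have hne : α ≠ β := by
    rintro rfl; exact K.ne (ha.symm.trans hb)
  exact ⟨α, β, lt_of_le_of_ne hβ.1 hne, hβ.2, ha.symm, hb.symm⟩

/-- The good interval `(α, β)` for reals `α < β < α + 1`. -/
def seg (α β : ℝ) (h1 : α < β) (h2 : β < α + 1) : GoodInt :=
  ⟨(α : S1), (β : S1), fun h => by
    have := coe_inj_Ico (μ := α) ⟨le_rfl, by linarith⟩ ⟨h1.le, h2⟩ h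
    linarith⟩

lemma a_notMem (K : GoodInt) : K.a ∉ K.carrier := by
  obtain ⟨α, β, h1, h2, ha, hb⟩ := exists_coords_self K
  rw [carrier_eq ha hb h1 h2, ha, coe_mem_image le_rfl h2.le ⟨le_rfl, by linarith⟩]
  intro h; exact lt_irrefl _ h.1

lemma b_notMem (K : GoodInt) : K.b ∉ K.carrier := by
  obtain ⟨α, β, h1, h2, ha, hb⟩ := exists_coords_self K
  rw [carrier_eq ha hb h1 h2, hb, coe_mem_image le_rfl h2.le ⟨h1.le, h2.le⟩]
  intro h; exact lt_irrefl _ h.2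

lemma carrier_injective {K K' : GoodInt} (h : K.carrier = K'.carrier) : K = K' := by
  obtain ⟨α, β, h1, h2, ha, hb⟩ := exists_coords_self K
  have hn : (α : S1) ∉ K'.carrier := by
    rw [← h, ← ha]; exact a_notMem K
  obtain ⟨α', β', g0, g1, g2, g3, ga, gb⟩ := exists_coords α K' hn
  rw [carrier_eq ha hb h1 h2, carrier_eq ga gb g1 g3] at h
  have hI : Ioo α β = Ioo α' β' := by
    ext t
    constructor
    · intro ht
      have : (t : S1) ∈ (fun t : ℝ => (t : S1)) '' Ioo α β := ⟨t, ht, rfl⟩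
      rw [h] at this
      exact (coe_mem_image g0 g2 ⟨ht.1.le, by linarith [ht.2]⟩).1 this
    · intro ht
      have : (t : S1) ∈ (fun t : ℝ => (t : S1)) '' Ioo α' β' := ⟨t, ht, rfl⟩
      rw [← h] at this
      exact (coe_mem_image le_rfl h2.le ⟨by linarith [ht.1], by linarith [ht.2]⟩).1 this
  have e1 : α = α' := by rw [← csInf_Ioo h1, hI, csInf_Ioo g1]
  have e2 : β = β' := by rw [← csSup_Ioo h1, hI, csSup_Ioo g1]
  subst e1 e2
  cases K; cases K'
  simp only at ha hb ga gb
  simp [ha, hb, ga, gb]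

lemma carrier_nonempty (K : GoodInt) : K.carrier.Nonempty := by
  obtain ⟨α, β, h1, h2, ha, hb⟩ := exists_coords_self K
  rw [carrier_eq ha hb h1 h2]
  exact (nonempty_Ioo.2 h1).image _

lemma isOpen_carrier (K : GoodInt) : IsOpen K.carrier := by
  obtain ⟨α, β, h1, h2, ha, hb⟩ := exists_coords_self K
  rw [carrier_eq ha hb h1 h2]
  exact QuotientAddGroup.isOpenMap_coe _ isOpen_Ioo

lemma isPreconnected_carrier (K : GoodInt) : IsPreconnected K.carrier := by
  obtain ⟨α, β, h1, h2, ha, hb⟩ := exists_coords_self K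
  rw [carrier_eq ha hb h1 h2]
  exact isPreconnected_Ioo.image _ (AddCircle.continuous_mk' 1).continuousOn

lemma carrier_not_countable (K : GoodInt) : ¬ K.carrier.Countable := by
  obtain ⟨α, β, h1, h2, ha, hb⟩ := exists_coords_self K
  rw [carrier_eq ha hb h1 h2]
  intro h
  have hinj : InjOn (fun t : ℝ => (t : S1)) (Ioo α β) := fun s hs t ht hst =>
    coe_inj_Ico (μ := α) ⟨hs.1.le, by linarith [hs.2]⟩ ⟨ht.1.le, by linarith [ht.2]⟩ hst
  have h3 := countable_of_injective_of_countable_image hinj h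
  have h4 := Cardinal.mk_Ioo_real h1
  have h5 := Cardinal.le_aleph0_iff_set_countable.2 h3
  rw [h4] at h5
  exact absurd h5 (not_le.2 Cardinal.aleph0_lt_continuum)

lemma dual_carrier_coords {K : GoodInt} {α β : ℝ} (ha : K.a = (α : S1)) (hb : K.b = (β : S1))
    (h1 : α < β) (h2 : β < α + 1) :
    K.dual.carrier = (fun t : ℝ => (t : S1)) '' Ioo β (α + 1) :=
  carrier_eq (K := K.dual) hb (by rw [coe_add_one]; exact ha) h2 (by linarith)

lemma mem_trichotomy (K : GoodInt) (z : S1) :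
    z = K.a ∨ z = K.b ∨ z ∈ K.carrier ∨ z ∈ K.dual.carrier := by
  obtain ⟨α, β, h1, h2, ha, hb⟩ := exists_coords_self K
  rw [dual_carrier_coords ha hb h1 h2, carrier_eq ha hb h1 h2, ha, hb]
  obtain ⟨t, ht, rfl⟩ := exists_rep α z
  rcases lt_trichotomy t β with h | h | h
  · rcases ht.1.eq_or_lt with h' | h'
    · left; rw [h']
    · right; right; left; exact ⟨t, ⟨h', h⟩, rfl⟩
  · right; left; rw [h]
  · right; right; right; exact ⟨t, ⟨h, ht.2⟩, rfl⟩

lemma disjoint_dual (K : GoodInt) : Disjoint K.carrier K.dual.carrier := by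
  obtain ⟨α, β, h1, h2, ha, hb⟩ := exists_coords_self K
  rw [dual_carrier_coords ha hb h1 h2, carrier_eq ha hb h1 h2, Set.disjoint_left]
  rintro _ ⟨s, hs, rfl⟩ h
  have := (coe_mem_image (μ := α) h1.le le_rfl ⟨hs.1.le, by linarith [hs.2]⟩).1 h
  exact lt_asymm this.1 hs.2

/-- The complement of a good interval is the closure of its dual (one inclusion). -/
lemma compl_subset_closure_dual (K : GoodInt) : K.carrierᶜ ⊆ closure K.dual.carrier := by
  obtain ⟨α, β, h1, h2, ha, hb⟩ := exists_coords_self K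
  have key : (fun t : ℝ => (t : S1)) '' Icc β (α + 1) ⊆ closure K.dual.carrier := by
    rw [dual_carrier_coords ha hb h1 h2, ← closure_Ioo h2.ne]
    exact image_closure_subset_closure_image (AddCircle.continuous_mk' 1)
  intro z hz
  rcases mem_trichotomy K z with h | h | h | h
  · exact key ⟨α + 1, ⟨h2.le, le_rfl⟩, by rw [h, ha]; exact coe_add_one α⟩
  · exact key ⟨β, ⟨le_rfl, h2.le⟩, by rw [h, hb]⟩
  · exact absurd h hz
  · exact subset_closure h

lemma dual_subset_dual {J K : GoodInt} (h : J.carrier ⊆ K.carrier) :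
    K.dual.carrier ⊆ J.dual.carrier := by
  intro z hz
  -- An open set disjoint from `K ⊇ J` is disjoint from the closure of `J`.
  by_contra hz'
  have h1 : z ∈ closure J.dual.dual.carrier := compl_subset_closure_dual J.dual hz'
  obtain ⟨w, hw, hw'⟩ := mem_closure_iff.1 h1 _ (isOpen_carrier _) hz
  exact Set.disjoint_left.1 (disjoint_dual K) (h hw') hw

lemma not_mem_dual {K : GoodInt} {z : S1} (h : z ∈ K.carrier) : z ∉ K.dual.carrier :=
  Set.disjoint_left.1 (disjoint_dual K) h

/-- An open set not contained in a good interval `J` meets the dual of `J`. -/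
lemma inter_dual_nonempty {J : GoodInt} {U : Set S1} (hU : IsOpen U)
    (h : ¬ U ⊆ J.carrier) : (U ∩ J.dual.carrier).Nonempty := by
  obtain ⟨y, hy, hyJ⟩ := Set.not_subset.1 h
  exact mem_closure_iff.1 (compl_subset_closure_dual J hyJ) _ hU hy

/-- Two members of a lamination system are nested, disjoint, or cover the circle
up to endpoints. -/
lemma unlinked_cases (L : LamSys) {J K : GoodInt} (hJ : J ∈ L.mem) (hK : K ∈ L.mem) :
    J.carrier ⊆ K.carrier ∨ K.carrier ⊆ J.carrier ∨ Disjoint J.carrier K.carrier ∨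
      J.dual.carrier ⊆ K.carrier := by
  rcases L.unlinked J hJ K hK with h | h | h | h
  · exact Or.inl h
  · exact Or.inr (Or.inr (Or.inr h))
  · exact Or.inr (Or.inr (Or.inl ((disjoint_dual K).symm.mono_left h)))
  · exact Or.inr (Or.inl (dual_subset_dual h))

/-- Crossing arcs `α < α' < β < β'` cannot both belong to a lamination system. -/
lemma not_linked (L : LamSys) {J K : GoodInt} (hJ : J ∈ L.mem) (hK : K ∈ L.mem)
    {μ α β α' β' : ℝ} (h0 : μ < α) (h1 : α < α') (h2 : α' < β) (h3 : β < β') (h4 : β' ≤ μ + 1)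
    (Ja : J.a = (α : S1)) (Jb : J.b = (β : S1)) (Ka : K.a = (α' : S1)) (Kb : K.b = (β' : S1)) :
    False := by
  have hJc := carrier_eq Ja Jb (by linarith) (by linarith)
  have hKc := carrier_eq Ka Kb (by linarith) (by linarith)
  have mJ : ∀ t ∈ Icc μ (μ + 1), (t : S1) ∈ J.carrier ↔ t ∈ Ioo α β := fun t ht => by
    rw [hJc]; exact coe_mem_image h0.le (by linarith) ht
  have mK : ∀ t ∈ Icc μ (μ + 1), (t : S1) ∈ K.carrier ↔ t ∈ Ioo α' β' := fun t ht => by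
    rw [hKc]; exact coe_mem_image (by linarith) (by linarith) ht
  rcases unlinked_cases L hJ hK with h | h | h | h
  · obtain ⟨t, ht⟩ := exists_between h1
    have hm : t ∈ Icc μ (μ + 1) := ⟨by linarith, by linarith⟩
    have := (mK t hm).1 (h ((mJ t hm).2 ⟨ht.1, by linarith⟩))
    linarith [this.1]
  · obtain ⟨t, ht⟩ := exists_between h3
    have hm : t ∈ Icc μ (μ + 1) := ⟨by linarith, by linarith⟩
    have := (mJ t hm).1 (h ((mK t hm).2 ⟨by linarith, by linarith⟩))
    linarith [this.2]
  · obtain ⟨t, ht⟩ := exists_between h2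
    have hm : t ∈ Icc μ (μ + 1) := ⟨by linarith, by linarith⟩
    exact Set.disjoint_left.1 h ((mJ t hm).2 ⟨by linarith, by linarith⟩)
      ((mK t hm).2 ⟨by linarith, by linarith⟩)
  · have hm : μ ∈ Icc μ (μ + 1) := ⟨by linarith, by linarith⟩
    have hd : (μ : S1) ∈ J.dual.carrier := by
      rw [dual_carrier_coords Ja Jb (by linarith) (by linarith)]
      exact ⟨μ + 1, ⟨by linarith, by linarith⟩, coe_add_one μ⟩
    have := (mK μ hm).1 (h hd)
    linarith [this.1]

/-- The union of an ascending sequence of arcs in coordinates is the arc between the limits. -/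
lemma iUnion_image_Ioo {α β : ℕ → ℝ} {a b : ℝ} (hα : Antitone α) (hβ : Monotone β)
    (ha : IsGLB (range α) a) (hb : IsLUB (range β) b) :
    (⋃ n, (fun t : ℝ => (t : S1)) '' Ioo (α n) (β n)) = (fun t : ℝ => (t : S1)) '' Ioo a b := by
  rw [← image_iUnion]
  congr 1
  ext t
  simp only [mem_iUnion, mem_Ioo]
  constructor
  · rintro ⟨n, h1, h2⟩
    exact ⟨(ha.1 ⟨n, rfl⟩).trans_lt h1, h2.trans_le (hb.1 ⟨n, rfl⟩)⟩
  · rintro ⟨h1, h2⟩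
    obtain ⟨_, ⟨m, rfl⟩, hm⟩ := (isGLB_lt_iff ha).1 h1
    obtain ⟨_, ⟨n, rfl⟩, hn⟩ := (lt_isLUB_iff hb).1 h2
    exact ⟨max m n, (hα (le_max_left m n)).trans_lt hm, hn.trans_le (hβ (le_max_right m n))⟩

lemma Ioo_of_image_subset {μ α β α' β' : ℝ} (h0 : μ ≤ α) (h1 : α < β) (h2 : β ≤ μ + 1)
    (h0' : μ ≤ α') (h2' : β' ≤ μ + 1)
    (h : (fun t : ℝ => (t : S1)) '' Ioo α β ⊆ (fun t : ℝ => (t : S1)) '' Ioo α' β') :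
    α' ≤ α ∧ β ≤ β' := by
  rw [← Ioo_subset_Ioo_iff h1]
  intro t ht
  exact (coe_mem_image h0' h2' ⟨by linarith [ht.1], by linarith [ht.2]⟩).1 (h ⟨t, ht, rfl⟩)

/-- An ascending sequence of good intervals missing two common points has a good interval
as its union. -/
lemma exists_union (c : ℕ → GoodInt) (hc : ∀ n, (c n).carrier ⊆ (c (n + 1)).carrier)
    (p x : S1) (hpx : x ≠ p) (hp : ∀ n, p ∉ (c n).carrier) (hx : ∀ n, x ∉ (c n).carrier) :
    ∃ J : GoodInt, J.carrier = ⋃ n, (c n).carrier := by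
  obtain ⟨μ, -, rfl⟩ := exists_rep 0 p
  choose α β h1 h2 h3 h4 ha hb using fun n => exists_coords μ (c n) (hp n)
  have hcar : ∀ n, (c n).carrier = (fun t : ℝ => (t : S1)) '' Ioo (α n) (β n) := fun n =>
    carrier_eq (ha n) (hb n) (h2 n) (h4 n)
  have hstep : ∀ n, α (n + 1) ≤ α n ∧ β n ≤ β (n + 1) := fun n => by
    have := hc n
    rw [hcar, hcar] at this
    exact Ioo_of_image_subset (h1 n) (h2 n) (h3 n) (h1 _) (h3 _) this
  have hα : Antitone α := antitone_nat_of_succ_le fun n => (hstep n).1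
  have hβ : Monotone β := monotone_nat_of_le_succ fun n => (hstep n).2
  have gα := isGLB_ciInf (f := α) ⟨μ, by rintro _ ⟨n, rfl⟩; exact h1 n⟩
  have gβ := isLUB_ciSup (f := β) ⟨μ + 1, by rintro _ ⟨n, rfl⟩; exact h3 n⟩
  set a := iInf α
  set b := iSup β
  have hU := iUnion_image_Ioo hα hβ gα gβ
  have haμ : μ ≤ a := gα.2 (by rintro _ ⟨n, rfl⟩; exact h1 n)
  have hbμ : b ≤ μ + 1 := gβ.2 (by rintro _ ⟨n, rfl⟩; exact h3 n)
  have hab : a < b := (gα.1 ⟨0, rfl⟩).trans_lt ((h2 0).trans_le (gβ.1 ⟨0, rfl⟩))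
  obtain ⟨ξ, hξ, rfl⟩ := exists_rep μ x
  have hξμ : μ < ξ := lt_of_le_of_ne hξ.1 (by rintro rfl; exact hpx rfl)
  have hlt : b < a + 1 := by
    by_contra hcon
    push Not at hcon
    have hmem : (ξ : S1) ∈ ⋃ n, (fun t : ℝ => (t : S1)) '' Ioo (α n) (β n) := by
      rw [hU]; exact ⟨ξ, ⟨by linarith, by linarith [hξ.2]⟩, rfl⟩
    obtain ⟨n, hn⟩ := mem_iUnion.1 hmem
    exact hx n (by rw [hcar]; exact hn)
  refine ⟨seg a b hab hlt, ?_⟩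
  rw [carrier_eq (K := seg a b hab hlt) rfl rfl hab hlt, ← hU]
  exact iUnion_congr fun n => (hcar n).symm

/-! ### Free order-preserving actions on a linear order -/

/-- A free action by strictly increasing maps on a linear order in which nonempty bounded sets
have suprema. -/
structure FreeOrderAction (Γ X : Type*) [Group Γ] [LinearOrder X] [MulAction Γ X] : Prop where
  lub : ∀ S : Set X, S.Nonempty → BddAbove S → ∃ s, IsLUB S s
  mono : ∀ g : Γ, StrictMono (fun x : X => g • x)
  free : ∀ g : Γ, g ≠ 1 → ∀ x : X, g • x ≠ x

namespace FreeOrderAction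

variable {Γ X : Type*} [Group Γ] [LinearOrder X] [MulAction Γ X]

lemma sign_aux [DenselyOrdered X] (H : FreeOrderAction Γ X) {g : Γ} {x y : X} (hxy : x < y)
    (hx : x < g • x) (hy : g • y < y) : False := by
  have hg : g ≠ 1 := by rintro rfl; simp at hx
  obtain ⟨s, hs⟩ := H.lub {z | z ≤ y ∧ z < g • z} ⟨x, hxy.le, hx⟩ ⟨y, fun z hz => hz.1⟩
  have hsy : s ≤ y := hs.2 fun z hz => hz.1
  -- The supremum of the points moved up is neither moved up nor moved down.
  rcases lt_trichotomy s (g • s) with h | h | h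
  · have hsy' : s < y := lt_of_le_of_ne hsy (by rintro rfl; exact lt_asymm h hy)
    obtain ⟨z, hz1, hz2⟩ := exists_between (lt_min h hsy')
    have hz3 := hz2.trans_le (min_le_left _ _)
    have hz4 := hz2.trans_le (min_le_right _ _)
    exact absurd (hs.1 ⟨hz4.le, hz3.trans (H.mono g hz1)⟩) (not_le.2 hz1)
  · exact H.free g hg s h.symm
  · obtain ⟨z, hz, hz'⟩ := (lt_isLUB_iff hs).1 h
    have h1 : g • z ≤ g • s := (H.mono g).monotone (hs.1 hz)
    exact lt_asymm hz.2 (h1.trans_lt hz')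

/-- An element moving one point up moves every point up. -/
lemma sign [DenselyOrdered X] (H : FreeOrderAction Γ X) {g : Γ} {x : X} (hx : x < g • x) (y : X) :
    y < g • y := by
  have hg : g ≠ 1 := by rintro rfl; simp at hx
  by_contra hc
  have hy : g • y < y := lt_of_le_of_ne (not_lt.1 hc) (H.free g hg y)
  rcases lt_trichotomy x y with h | h | h
  · exact H.sign_aux h hx hy
  · subst h; exact lt_asymm hx hy
  · exact H.sign_aux (g := g⁻¹) (x := g • y) (y := g • x) (H.mono g h) (by simpa) (by simpa)

/-- The Archimedean property: a bounded monotone orbit would converge to a fixed point. -/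
lemma arch [DenselyOrdered X] (H : FreeOrderAction Γ X) {g : Γ} {x : X} (hx : x < g • x) (y : X) :
    ∃ n : ℕ, y < g ^ n • x := by
  by_contra! hc
  obtain ⟨s, hs⟩ := H.lub (range fun n : ℕ => g ^ n • x) ⟨_, 0, rfl⟩
    ⟨y, by rintro _ ⟨n, rfl⟩; exact hc n⟩
  have h1 : g⁻¹ • s < s := by
    have := H.mono g⁻¹ (H.sign hx s)
    simpa using this
  obtain ⟨_, ⟨n, rfl⟩, hn⟩ := (lt_isLUB_iff hs).1 h1
  have h2 := H.mono g hn
  simp only [smul_smul, ← pow_succ', mul_inv_cancel, one_smul] at h2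
  exact absurd (hs.1 ⟨n + 1, rfl⟩) (not_le.2 h2)

lemma arch_inv [DenselyOrdered X] (H : FreeOrderAction Γ X) {g : Γ} {x : X} (hx : x < g • x)
    (y : X) : ∃ n : ℕ, (g ^ n)⁻¹ • x < y := by
  obtain ⟨n, hn⟩ := H.arch (H.sign hx y) x
  refine ⟨n, ?_⟩
  have := H.mono (g ^ n)⁻¹ hn
  simpa using this

lemma strictMono_zpow [DenselyOrdered X] (H : FreeOrderAction Γ X) {g : Γ} {x : X}
    (hx : x < g • x) : StrictMono (fun k : ℤ => g ^ k • x) := by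
  refine strictMono_int_of_lt_succ fun k => ?_
  have := H.sign hx (g ^ k • x)
  rwa [smul_smul, ← zpow_one_add, add_comm] at this

lemma floor [DenselyOrdered X] (H : FreeOrderAction Γ X) {g : Γ} {x : X} (hx : x < g • x)
    (y : X) : ∃ k : ℤ, g ^ k • x ≤ y ∧ y < g ^ (k + 1) • x := by
  have hmono := H.strictMono_zpow hx
  obtain ⟨N, hN⟩ := H.arch hx y
  obtain ⟨M, hM⟩ := H.arch_inv hx y
  obtain ⟨k, hk, hk'⟩ := Int.exists_greatest_of_bdd (P := fun k : ℤ => g ^ k • x ≤ y)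
    ⟨N, fun z hz => by
      have h1 : g ^ z • x < g ^ (N : ℤ) • x := by rw [zpow_natCast]; exact hz.trans_lt hN
      exact (hmono.lt_iff_lt.1 h1).le⟩
    ⟨-M, by rw [zpow_neg, zpow_natCast]; exact hM.le⟩
  refine ⟨k, hk, ?_⟩
  by_contra! h
  linarith [hk' _ h]

/-- A group with a least positive element is generated by it. -/
lemma mem_zpowers_of_min [DenselyOrdered X] (H : FreeOrderAction Γ X) {g : Γ} {a : X}
    (hg : a < g • a) (hmin : ∀ h : Γ, a < h • a → g • a ≤ h • a) (h : Γ) :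
    h ∈ Subgroup.zpowers g := by
  obtain ⟨k, hk1, hk2⟩ := H.floor hg (h • a)
  have h1 : a ≤ ((g ^ k)⁻¹ * h) • a := by
    have := (H.mono (g ^ k)⁻¹).monotone hk1
    simpa [smul_smul] using this
  have h2 : ((g ^ k)⁻¹ * h) • a < g • a := by
    have := H.mono (g ^ k)⁻¹ hk2
    simpa [smul_smul, zpow_add] using this
  have h3 : ((g ^ k)⁻¹ * h) • a = a := by
    by_contra hne
    exact absurd (hmin _ (lt_of_le_of_ne h1 (Ne.symm hne))) (not_le.2 h2)
  have h4 : (g ^ k)⁻¹ * h = 1 := by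
    by_contra hne
    exact H.free _ hne a h3
  exact ⟨k, (inv_mul_eq_one.1 h4)⟩

/-- Without a least positive element there is a point which is a limit from above of every
orbit. -/
lemma exists_common_limit [DenselyOrdered X] (H : FreeOrderAction Γ X) (a₀ : X)
    (hne : ∃ g : Γ, a₀ < g • a₀)
    (hno : ∀ g : Γ, a₀ < g • a₀ → ∃ h : Γ, a₀ < h • a₀ ∧ h • a₀ < g • a₀) :
    ∃ l : X, ∀ a c : X, l < c → ∃ h : Γ, l < h • a ∧ h • a < c := by
  obtain ⟨g₀, hg₀⟩ := hne
  set S : Set X := {x | ∃ g : Γ, a₀ < g • a₀ ∧ g • a₀ = x}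
  obtain ⟨l, hl⟩ := H.lub (lowerBounds S) ⟨a₀, by rintro _ ⟨g, hg, rfl⟩; exact hg.le⟩
    ⟨g₀ • a₀, fun x hx => hx ⟨g₀, hg₀, rfl⟩⟩
  rw [isLUB_lowerBounds] at hl
  refine ⟨l, fun a c hc => ?_⟩
  obtain ⟨_, ⟨g, hg, rfl⟩, hgc⟩ := (isGLB_lt_iff hl).1 hc
  obtain ⟨g', hg', hg'g⟩ := hno g hg
  obtain ⟨g'', hg'', hlt2⟩ := hno g' hg'
  have hl' : l < g' • a₀ := (hl.1 ⟨g'', hg'', rfl⟩).trans_lt hlt2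
  -- The translation `δ` moves the point `g' • a₀ > l` to `g • a₀ < c`, so no orbit of `⟨δ⟩`
  -- can jump over `(l, c)`.
  set δ := g * g'⁻¹
  have hδ : δ • (g' • a₀) = g • a₀ := by simp [δ, smul_smul]
  have hpos : g' • a₀ < δ • (g' • a₀) := by rw [hδ]; exact hg'g
  obtain ⟨k, hk1, hk2⟩ := H.floor (H.sign hpos a) l
  refine ⟨δ ^ (k + 1), hk2, ?_⟩
  calc δ ^ (k + 1) • a = δ • (δ ^ k • a) := by rw [smul_smul, ← zpow_one_add, add_comm]
    _ < δ • (g' • a₀) := H.mono δ (hk1.trans_lt hl')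
    _ = g • a₀ := hδ
    _ < c := hgc

/-- A nontrivial group acting freely is cyclic, or some point is a limit from above of every
orbit. -/
lemma cyclic_or_common_limit [DenselyOrdered X] [Nonempty X] (H : FreeOrderAction Γ X)
    (hne : ∃ g : Γ, g ≠ 1) :
    (∃ g : Γ, g ≠ 1 ∧ ∀ h : Γ, h ∈ Subgroup.zpowers g) ∨
      ∃ l : X, ∀ a c : X, l < c → ∃ h : Γ, l < h • a ∧ h • a < c := by
  obtain ⟨a₀⟩ := ‹Nonempty X›
  have hpos : ∃ g : Γ, a₀ < g • a₀ := by
    obtain ⟨g, hg⟩ := hne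
    rcases lt_or_gt_of_ne (H.free g hg a₀) with h | h
    · exact ⟨g⁻¹, by simpa using H.mono g⁻¹ h⟩
    · exact ⟨g, h⟩
  by_cases hno : ∀ g : Γ, a₀ < g • a₀ → ∃ h : Γ, a₀ < h • a₀ ∧ h • a₀ < g • a₀
  · exact Or.inr (H.exists_common_limit a₀ hpos hno)
  · push Not at hno
    obtain ⟨g, hg, hmin⟩ := hno
    exact Or.inl ⟨g, by rintro rfl; simp at hg, H.mem_zpowers_of_min hg hmin⟩

end FreeOrderAction

/-! ### Constructing gaps -/

/-- Let `F ⊆ L` be such that every leaf lies on a member of `F`, no two members of `F` cover the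
circle up to endpoints, and unions of ascending sequences in `F` stay in `F`. Then the maximal
elements of `F` form a gap, and every member of `F` lies below a maximal one. -/
lemma exists_gap (L : LamSys) (F : Set GoodInt) (hFL : F ⊆ L.mem)
    (hcov : ∀ K ∈ L.mem, ∃ J ∈ F, K.carrier ⊆ J.carrier ∨ K.dual.carrier ⊆ J.carrier)
    (hdual : ∀ J ∈ F, ∀ K ∈ F, ¬ J.dual.carrier ⊆ K.carrier)
    (hchain : ∀ c : ℕ → GoodInt, (∀ n, c n ∈ F) →
      (∀ n, (c n).carrier ⊆ (c (n + 1)).carrier) → ∃ J ∈ F, J.carrier = ⋃ n, (c n).carrier) :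
    ∃ Γ : Set GoodInt, L.IsGap Γ ∧ Γ ⊆ F ∧ (∀ J ∈ F, ∃ M ∈ Γ, J.carrier ⊆ M.carrier) ∧
      ∀ M ∈ Γ, ∀ J ∈ F, M.carrier ⊆ J.carrier → J = M := by
  have hmax : ∀ J ∈ F, ∃ M ∈ F, (∀ K ∈ F, M.carrier ⊆ K.carrier → K = M) ∧
      J.carrier ⊆ M.carrier := by
    intro J hJ
    -- Enlarge `J` step by step, swallowing the points of a dense sequence whenever possible.
    let q := TopologicalSpace.denseSeq S1
    have hstep : ∀ (n : ℕ) (K : F), ∃ K' : F, K.1.carrier ⊆ K'.1.carrier ∧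
        ∀ N ∈ F, K.1.carrier ⊆ N.carrier → q n ∈ N.carrier → q n ∈ K'.1.carrier := by
      intro n K
      by_cases h : ∃ N ∈ F, K.1.carrier ⊆ N.carrier ∧ q n ∈ N.carrier
      · obtain ⟨N, hN, h1, h2⟩ := h
        exact ⟨⟨N, hN⟩, h1, fun _ _ _ _ => h2⟩
      · exact ⟨K, Subset.rfl, fun N hN h1 h2 => absurd ⟨N, hN, h1, h2⟩ h⟩
    choose next hn1 hn2 using hstep
    let c : ℕ → F := fun n => Nat.rec ⟨J, hJ⟩ (fun n K => next n K) n
    have hc : ∀ n, c (n + 1) = next n (c n) := fun n => rfl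
    obtain ⟨M, hM, hMU⟩ := hchain (fun n => (c n).1) (fun n => (c n).2)
      (fun n => by rw [hc]; exact hn1 n (c n))
    have hcM : ∀ n, (c n).1.carrier ⊆ M.carrier := fun n => by
      rw [hMU]; exact subset_iUnion (fun n => (c n).1.carrier) n
    refine ⟨M, hM, fun K hK hMK => ?_, hcM 0⟩
    by_contra hne
    have hnot : ¬ K.carrier ⊆ M.carrier := fun h =>
      hne (carrier_injective (Subset.antisymm h hMK))
    obtain ⟨n, hz1, hz2⟩ := (TopologicalSpace.denseRange_denseSeq S1).exists_mem_open
      ((isOpen_carrier K).inter (isOpen_carrier M.dual))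
      (inter_dual_nonempty (isOpen_carrier K) hnot)
    have := hn2 n (c n) K hK ((hcM n).trans hMK) hz1
    rw [← hc] at this
    exact not_mem_dual (hcM (n + 1) this) hz2
  refine ⟨{M | M ∈ F ∧ ∀ K ∈ F, M.carrier ⊆ K.carrier → K = M}, ⟨?_, ?_, ?_⟩, ?_, ?_, ?_⟩
  · exact fun M hM => hFL hM.1
  · intro M hM N hN hne
    rcases unlinked_cases L (hFL hM.1) (hFL hN.1) with h | h | h | h
    · exact absurd (hM.2 N hN.1 h).symm hne
    · exact absurd (hN.2 M hM.1 h) hne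
    · exact h
    · exact absurd h (hdual M hM.1 N hN.1)
  · intro K hK
    obtain ⟨J, hJ, h⟩ := hcov K hK
    obtain ⟨M, hM, hMm, hJM⟩ := hmax J hJ
    exact ⟨M, ⟨hM, hMm⟩, h.imp (·.trans hJM) (·.trans hJM)⟩
  · exact fun M hM => hM.1
  · intro J hJ
    obtain ⟨M, hM, hMm, hJM⟩ := hmax J hJ
    exact ⟨M, ⟨hM, hMm⟩, hJM⟩
  · exact fun M hM => hM.2

/-- The endpoints of a quite full lamination system are dense: an interval without endpoints
would sit inside the vertex set of a gap, which is countable. -/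
lemma exists_endpoint (L : LamSys) (hL : L.QuiteFull) (C : GoodInt) :
    ∃ K ∈ L.mem, K.a ∈ C.carrier ∨ K.b ∈ C.carrier := by
  by_contra! hE
  have hside : ∀ K ∈ L.mem, C.carrier ⊆ K.carrier ∨ C.carrier ⊆ K.dual.carrier := by
    intro K hK
    refine (isPreconnected_carrier C).subset_or_subset (isOpen_carrier K) (isOpen_carrier K.dual)
      (disjoint_dual K) fun z hz => ?_
    rcases mem_trichotomy K z with h | h | h | h
    · exact absurd (h ▸ hz) (hE K hK).1
    · exact absurd (h ▸ hz) (hE K hK).2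
    · exact Or.inl h
    · exact Or.inr h
  have hinf : C.carrier.Infinite := fun h => carrier_not_countable C h.countable
  obtain ⟨p, hp, x, hx, hpx⟩ := hinf.nontrivial
  set F : Set GoodInt := {K | K ∈ L.mem ∧ Disjoint K.carrier C.carrier}
  have hcov : ∀ K ∈ L.mem, ∃ J ∈ F, K.carrier ⊆ J.carrier ∨ K.dual.carrier ⊆ J.carrier := by
    intro K hK
    rcases hside K hK with h | h
    · exact ⟨K.dual, ⟨L.dual_mem K hK, (disjoint_dual K).symm.mono_right h⟩, Or.inr Subset.rfl⟩
    · exact ⟨K, ⟨hK, (disjoint_dual K).mono_right h⟩, Or.inl Subset.rfl⟩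
  have hdual : ∀ J ∈ F, ∀ K ∈ F, ¬ J.dual.carrier ⊆ K.carrier := by
    intro J hJ K hK h
    rcases hside J hJ.1 with h' | h'
    · exact Set.disjoint_left.1 hJ.2 (h' hp) hp
    · exact Set.disjoint_left.1 hK.2 (h (h' hp)) hp
  have hchain : ∀ c : ℕ → GoodInt, (∀ n, c n ∈ F) →
      (∀ n, (c n).carrier ⊆ (c (n + 1)).carrier) →
      ∃ J ∈ F, J.carrier = ⋃ n, (c n).carrier := by
    intro c hc hasc
    obtain ⟨J, hJ⟩ := exists_union c hasc p x hpx.symm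
      (fun n h => Set.disjoint_left.1 (hc n).2 h hp) (fun n h => Set.disjoint_left.1 (hc n).2 h hx)
    refine ⟨J, ⟨L.chain_closed c (fun n => (hc n).1) hasc J hJ, ?_⟩, hJ⟩
    rw [hJ, Set.disjoint_iUnion_left]
    exact fun n => (hc n).2
  obtain ⟨Γ, hgap, hΓF, -, -⟩ := exists_gap L F (fun K hK => hK.1) hcov hdual hchain
  have hsub : C.carrier ⊆ gapVerts Γ := by
    intro z hz hz'
    obtain ⟨K, hK, hzK⟩ := mem_iUnion₂.1 hz'
    exact Set.disjoint_left.1 (hΓF hK).2 hzK hz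
  refine carrier_not_countable C (Countable.mono hsub ?_)
  rcases hL Γ hgap with h | ⟨t, p, -, -, -, h⟩
  · exact h.countable
  · rw [h]; exact (countable_range t).union (countable_singleton p)

/-! ### The action on the invariant interval -/

/-- The image of a good interval under a permutation of the circle, on endpoints. -/
def gmap (g : Equiv.Perm S1) (K : GoodInt) : GoodInt :=
  ⟨g K.a, g K.b, fun h => K.ne (g.injective h)⟩

lemma gmap_carrier {g : Equiv.Perm S1} (hg : PosHomeo g) (hg' : PosHomeo g⁻¹) (K : GoodInt) :
    (gmap g K).carrier = g '' K.carrier := by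
  ext z
  constructor
  · intro hz
    refine ⟨g⁻¹ z, ?_, by simp⟩
    have := hg'.2.2 _ _ _ hz
    simpa [gmap, GoodInt.carrier] using this
  · rintro ⟨w, hw, rfl⟩
    exact hg.2.2 _ _ _ hw

/-- A group `G` of automorphisms of `L` preserving `I = (μ, ν)` and acting freely on it, the
action being transported to the real interval `Ioo μ ν`. -/
structure Acts (L : LamSys) (G : Subgroup (Equiv.Perm S1)) (I : GoodInt) (μ ν : ℝ)
    [MulAction G (Ioo μ ν)] : Prop where
  aut : ∀ g ∈ G, L.InAut g
  lt : μ < ν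
  lt' : ν < μ + 1
  ha : I.a = (μ : S1)
  hb : I.b = (ν : S1)
  inv : ∀ g ∈ G, g '' I.carrier = I.carrier
  act : ∀ (g : G) (t : Ioo μ ν), (((g • t : Ioo μ ν) : ℝ) : S1) = g.1 ((t : ℝ) : S1)
  free : FreeOrderAction G (Ioo μ ν)

namespace Acts

variable {L : LamSys} {G : Subgroup (Equiv.Perm S1)} {I : GoodInt} {μ ν : ℝ}
  [MulAction G (Ioo μ ν)]

lemma carrierI (A : Acts L G I μ ν) : I.carrier = (fun t : ℝ => (t : S1)) '' Ioo μ ν :=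
  carrier_eq A.ha A.hb A.lt A.lt'

lemma carrierI_dual (A : Acts L G I μ ν) :
    I.dual.carrier = (fun t : ℝ => (t : S1)) '' Ioo ν (μ + 1) :=
  dual_carrier_coords A.ha A.hb A.lt A.lt'

lemma mem_I (A : Acts L G I μ ν) {t : ℝ} (ht : t ∈ Icc μ (μ + 1)) :
    (t : S1) ∈ I.carrier ↔ t ∈ Ioo μ ν := by
  rw [A.carrierI]; exact coe_mem_image le_rfl A.lt'.le ht

lemma map_carrier (A : Acts L G I μ ν) {g : Equiv.Perm S1} (hg : g ∈ G) (K : GoodInt) :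
    (gmap g K).carrier = g '' K.carrier :=
  gmap_carrier (A.aut g hg).1 (A.aut _ (G.inv_mem hg)).1 K

lemma map_mem (A : Acts L G I μ ν) {g : Equiv.Perm S1} (hg : g ∈ G) {K : GoodInt}
    (hK : K ∈ L.mem) : gmap g K ∈ L.mem := by
  obtain ⟨J, hJ, hJK⟩ := (A.aut g hg).2 K hK
  rw [← A.map_carrier hg] at hJK
  rwa [← carrier_injective hJK]

lemma notMem_I (A : Acts L G I μ ν) {g : Equiv.Perm S1} (hg : g ∈ G) {z : S1}
    (hz : z ∉ I.carrier) : g z ∉ I.carrier := by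
  intro h
  rw [← A.inv g hg] at h
  obtain ⟨w, hw, hwz⟩ := h
  exact hz (g.injective hwz ▸ hw)

lemma mem_I_map (A : Acts L G I μ ν) {g : Equiv.Perm S1} (hg : g ∈ G) {z : S1}
    (hz : z ∈ I.carrier) : g z ∈ I.carrier := by
  rw [← A.inv g hg]; exact mem_image_of_mem g hz

lemma exists_pos (A : Acts L G I μ ν) (hne : ∃ g : G, g ≠ 1) (x : Ioo μ ν) :
    ∃ g : G, ∀ y : Ioo μ ν, y < g • y := by
  obtain ⟨g, hg⟩ := hne
  rcases lt_or_gt_of_ne (A.free.free g hg x) with h | h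
  · exact ⟨g⁻¹, A.free.sign (x := x) (by simpa using A.free.mono g⁻¹ h)⟩
  · exact ⟨g, A.free.sign h⟩

/-- If some leaf joins `I` to its complement, each common limit from above of the orbits is an
endpoint of a leaf: the translates of that leaf converge to a leaf with this endpoint. -/
lemma mem_E_of_crossing (A : Acts L G I μ ν) {K : GoodInt} (hK : K ∈ L.mem)
    (hKa : K.a ∈ I.carrier) (hKb : K.b ∉ I.carrier) {l : Ioo μ ν}
    (hl : ∀ a c : Ioo μ ν, l < c → ∃ h : G, l < h • a ∧ h • a < c) :
    ((l : ℝ) : S1) ∈ L.E := by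
  have hKa' := hKa
  rw [A.carrierI] at hKa'
  obtain ⟨α, hα, hαa⟩ := hKa'
  set a : Ioo μ ν := ⟨α, hα⟩ with ha
  have hout : ∀ z : S1, z ∉ I.carrier → ∃ β ∈ Icc ν (μ + 1), (β : S1) = z := by
    intro z hz
    obtain ⟨t, ht, rfl⟩ := exists_rep μ z
    rcases ht.1.eq_or_lt with h | h
    · exact ⟨μ + 1, ⟨A.lt'.le, le_rfl⟩, by rw [← h]; exact coe_add_one μ⟩
    · refine ⟨t, ⟨?_, ht.2.le⟩, rfl⟩
      by_contra! hc
      exact hz ((A.mem_I ⟨ht.1, ht.2.le⟩).2 ⟨h, hc⟩)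
  set S : Set ℝ := {x | ∃ h : G, l < h • a ∧ ((h • a : Ioo μ ν) : ℝ) = x} with hS
  have hglb : IsGLB S l := by
    refine ⟨?_, fun b hb => ?_⟩
    · rintro _ ⟨h, hh, rfl⟩; exact hh.le
    · by_contra! hlb
      obtain ⟨c, hc1, hc2⟩ := exists_between (lt_min hlb l.2.2)
      obtain ⟨h, hh1, hh2⟩ := hl a ⟨c, l.2.1.trans hc1, hc2.trans_le (min_le_right _ _)⟩ hc1
      have h3 : b ≤ _ := hb ⟨h, hh1, rfl⟩
      have h4 : ((h • a : Ioo μ ν) : ℝ) < c := hh2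
      linarith [hc2.trans_le (min_le_left _ _)]
  have hSne : S.Nonempty := by
    obtain ⟨c, hc1, hc2⟩ := exists_between l.2.2
    obtain ⟨h, hh1, hh2⟩ := hl a ⟨c, l.2.1.trans hc1, hc2⟩ hc1
    exact ⟨_, h, hh1, rfl⟩
  obtain ⟨x, hxanti, hxl, hxlim, hxS⟩ := hglb.exists_seq_strictAnti_tendsto_of_notMem
    (by rintro ⟨h, hh, hh'⟩; exact absurd hh' (ne_of_gt hh)) hSne
  choose h hh1 hh2 using hxS
  choose β hβ hβb using fun n => hout _ (A.notMem_I (h n).2 hKb)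
  have hxν : ∀ n, x n < ν := fun n => by rw [← hh2 n]; exact (h n • a).2.2
  have hxμ : ∀ n, μ < x n := fun n => l.2.1.trans (hxl n)
  have hJa : ∀ n, (gmap (h n).1 K).a = (x n : S1) := fun n => by
    rw [← hh2 n, A.act]; exact congrArg _ hαa.symm
  have hJb : ∀ n, (gmap (h n).1 K).b = (β n : S1) := fun n => (hβb n).symm
  have hJ : ∀ n, gmap (h n).1 K ∈ L.mem := fun n => A.map_mem (h n).2 hK
  have hβmono : Monotone β := by
    refine monotone_nat_of_le_succ fun n => ?_
    by_contra! hc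
    exact not_linked L (hJ (n + 1)) (hJ n) (hxμ (n + 1)) (hxanti (Nat.lt_succ_self n))
      ((hxν n).trans_le (hβ (n + 1)).1) hc (hβ n).2 (hJa _) (hJb _) (hJa _) (hJb _)
  have hcar : ∀ n, (gmap (h n).1 K).carrier = (fun t : ℝ => (t : S1)) '' Ioo (x n) (β n) :=
    fun n => carrier_eq (hJa n) (hJb n) ((hxν n).trans_le (hβ n).1)
      (by linarith [(hβ n).2, hxμ n])
  have hsup := isLUB_ciSup (f := β) ⟨μ + 1, by rintro _ ⟨n, rfl⟩; exact (hβ n).2⟩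
  have hinf : IsGLB (range x) (l : ℝ) := isGLB_of_tendsto_atTop hxanti.antitone hxlim
  set b := iSup β
  have hb1 : ν ≤ b := (hβ 0).1.trans (hsup.1 ⟨0, rfl⟩)
  have hb2 : b ≤ μ + 1 := hsup.2 (by rintro _ ⟨n, rfl⟩; exact (hβ n).2)
  have hlb : (l : ℝ) < b := l.2.2.trans_le hb1
  have hbl : b < (l : ℝ) + 1 := by linarith [l.2.1]
  have hmem : seg l b hlb hbl ∈ L.mem := by
    refine L.chain_closed (fun n => gmap (h n).1 K) hJ (fun n => ?_) _ ?_
    · simp only [hcar]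
      exact image_mono (Ioo_subset_Ioo (hxanti (Nat.lt_succ_self n)).le
        (hβmono (Nat.le_succ n)))
    · rw [carrier_eq (K := seg l b hlb hbl) rfl rfl hlb hbl]
      simp only [hcar]
      exact (iUnion_image_Ioo hxanti.antitone hβmono hinf hsup).symm
  exact mem_iUnion₂.2 ⟨_, hmem, Or.inl rfl⟩

/-- An arc `(α, β)` of the lamination with both endpoints inside `I` never contains the image of
one of its points under a positive element of `G`: the arc and its image would be linked. -/
lemma not_both (A : Acts L G I μ ν) {K : GoodInt} (hK : K ∈ L.mem) {α β : ℝ} (h1 : μ < α)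
    (h2 : α < β) (h3 : β < ν) (ha : K.a = (α : S1)) (hb : K.b = (β : S1)) {g : G}
    (hg : ∀ x : Ioo μ ν, x < g • x) {t : Ioo μ ν} (ht : α < t)
    (hgt : ((g • t : Ioo μ ν) : ℝ) < β) : False := by
  set a : Ioo μ ν := ⟨α, h1, h2.trans h3⟩ with haa
  set b : Ioo μ ν := ⟨β, h1.trans h2, h3⟩ with hbb
  have h4 : α < (g • a : Ioo μ ν) := hg a
  have h5 : ((g • a : Ioo μ ν) : ℝ) < (g • t : Ioo μ ν) := A.free.mono g (show a < t from ht)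
  have h6 : β < (g • b : Ioo μ ν) := hg b
  have h7 := (g • b : Ioo μ ν).2.2
  exact not_linked L hK (A.map_mem g.2 hK) h1 h4 (h5.trans hgt) h6 (by linarith [A.lt']) ha hb
    (by rw [A.act]; exact congrArg _ ha) (by rw [A.act]; exact congrArg _ hb)

/-- If no leaf joins `I` to its complement, the leaves inside `I` other than `ℓ(I)` do not share an
endpoint with `I`. -/
lemma inner_coords (A : Acts L G I μ ν) (hnc : ∀ K ∈ L.mem, K.a ∈ I.carrier → K.b ∈ I.carrier)
    {K : GoodInt} (hK : K ∈ L.mem) (hKI : K.carrier ⊆ I.carrier) (hne : K ≠ I) :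
    ∃ α β : ℝ, μ < α ∧ α < β ∧ β < ν ∧ K.a = (α : S1) ∧ K.b = (β : S1) := by
  have hu : (μ : S1) ∉ K.carrier := fun h => a_notMem I (by rw [A.ha]; exact hKI h)
  obtain ⟨α, β, g0, g1, g2, g3, ga, gb⟩ := exists_coords μ K hu
  have hsub := hKI
  rw [carrier_eq ga gb g1 g3, A.carrierI] at hsub
  have h := Ioo_of_image_subset g0 g1 g2 le_rfl A.lt'.le hsub
  have hαm : (α : S1) ∈ I.carrier ↔ α ∈ Ioo μ ν := A.mem_I ⟨g0, by linarith⟩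
  have hβm : (β : S1) ∈ I.carrier ↔ β ∈ Ioo μ ν := A.mem_I ⟨by linarith, g2⟩
  have h12 := hnc K hK
  have h21 := hnc K.dual (L.dual_mem K hK)
  simp only [GoodInt.dual] at h21
  rw [ga, gb, hαm, hβm] at h12 h21
  by_cases hα : μ < α
  · exact ⟨α, β, hα, g1, (h12 ⟨hα, by linarith⟩).2, ga, gb⟩
  · by_cases hβ : β < ν
    · exact ⟨α, β, (h21 ⟨by linarith, hβ⟩).1, g1, hβ, ga, gb⟩
    · exfalso
      apply hne
      have e1 : α = μ := by linarith
      have e2 : β = ν := by linarith [h.2]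
      apply carrier_injective
      rw [carrier_eq ga gb g1 g3, A.carrierI, e1, e2]

lemma subset_of_endpoints (A : Acts L G I μ ν) {K : GoodInt} (ha : K.a ∈ I.carrier)
    (hb : K.b ∈ I.carrier) (hu : (μ : S1) ∉ K.carrier) : K.carrier ⊆ I.carrier := by
  obtain ⟨α, β, g0, g1, g2, g3, ga, gb⟩ := exists_coords μ K hu
  rw [ga, A.mem_I ⟨g0, by linarith⟩] at ha
  rw [gb, A.mem_I ⟨by linarith, g2⟩] at hb
  rw [carrier_eq ga gb g1 g3, A.carrierI]
  exact image_mono (Ioo_subset_Ioo ha.1.le hb.2.le)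

lemma ne_I (K : GoodInt) (ha : K.a ∈ I.carrier) : K ≠ I := by
  rintro rfl; exact a_notMem _ ha

/-- Some leaf joins `I` to its complement. Otherwise the maximal leaves inside `I` or inside its
dual bound a gap which has both ends of `I` as vertices, and whose vertex set accumulates at both
of them from inside `I`. A polygon has finitely many vertices, and for a crown one of the two ends
is a tip, which has a side without vertices next to it. -/
lemma exists_crossing (A : Acts L G I μ ν) (hL : L.QuiteFull) (hne : ∃ g : G, g ≠ 1) :
    ∃ K ∈ L.mem, K.a ∈ I.carrier ∧ K.b ∉ I.carrier := by
  by_contra! hnc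
  obtain ⟨m, hm⟩ := exists_between A.lt
  obtain ⟨g, hg⟩ := A.exists_pos hne ⟨m, hm⟩
  have hIne := carrier_nonempty I
  have hI'ne := carrier_nonempty I.dual
  have hdis : ∀ {z}, z ∈ I.carrier → z ∉ I.dual.carrier := not_mem_dual
  have huI : (μ : S1) ∉ I.carrier := A.ha ▸ a_notMem I
  have hvI : (ν : S1) ∉ I.carrier := A.hb ▸ b_notMem I
  have huI' : (μ : S1) ∉ I.dual.carrier := A.ha ▸ b_notMem I.dual
  have hvI' : (ν : S1) ∉ I.dual.carrier := A.hb ▸ a_notMem I.dual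
  have hnuv : (ν : S1) ≠ (μ : S1) := by rw [← A.ha, ← A.hb]; exact I.ne.symm
  set F : Set GoodInt := {K | K ∈ L.mem ∧
    ((K.carrier ⊆ I.carrier ∧ K ≠ I) ∨ K.carrier ⊆ I.dual.carrier)}
  have huF : ∀ K ∈ F, (μ : S1) ∉ K.carrier := by
    rintro K ⟨-, h | h⟩ hu
    exacts [huI (h.1 hu), huI' (h hu)]
  have hvF : ∀ K ∈ F, (ν : S1) ∉ K.carrier := by
    rintro K ⟨-, h | h⟩ hu
    exacts [hvI (h.1 hu), hvI' (h hu)]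
  have hwlog : ∀ K ∈ L.mem, (μ : S1) ∉ K.carrier → K ∈ F ∨ K.dual ∈ F := by
    intro K hK hu
    by_cases ha : K.a ∈ I.carrier
    · exact Or.inl ⟨hK, Or.inl ⟨A.subset_of_endpoints ha (hnc K hK ha) hu, ne_I K ha⟩⟩
    · have hb : K.b ∉ I.carrier := fun hb => ha (hnc K.dual (L.dual_mem K hK) hb)
      obtain ⟨α, β, g0, g1, g2, g3, ga, gb⟩ := exists_coords μ K hu
      rw [ga, A.mem_I ⟨g0, by linarith⟩] at ha
      rw [gb, A.mem_I ⟨by linarith, g2⟩] at hb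
      have hβ : ν ≤ β := by
        by_contra! h; exact hb ⟨by linarith, h⟩
      rcases g0.eq_or_lt with h | h
      · right
        refine ⟨L.dual_mem K hK, Or.inr ?_⟩
        rw [dual_carrier_coords ga gb g1 g3, A.carrierI_dual, ← h]
        exact image_mono (Ioo_subset_Ioo hβ le_rfl)
      · left
        refine ⟨hK, Or.inr ?_⟩
        rw [carrier_eq ga gb g1 g3, A.carrierI_dual]
        refine image_mono (Ioo_subset_Ioo ?_ g2)
        by_contra! h'; exact ha ⟨h, h'⟩
  have hcov : ∀ K ∈ L.mem, ∃ J ∈ F, K.carrier ⊆ J.carrier ∨ K.dual.carrier ⊆ J.carrier := by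
    intro K hK
    by_cases hu : (μ : S1) ∈ K.carrier
    · rcases hwlog K.dual (L.dual_mem K hK) (not_mem_dual hu) with h | h
      · exact ⟨_, h, Or.inr Subset.rfl⟩
      · exact ⟨_, h, Or.inl Subset.rfl⟩
    · rcases hwlog K hK hu with h | h
      · exact ⟨_, h, Or.inl Subset.rfl⟩
      · exact ⟨_, h, Or.inr Subset.rfl⟩
  have hdual : ∀ J ∈ F, ∀ K ∈ F, ¬ J.dual.carrier ⊆ K.carrier := by
    rintro J ⟨-, hJ⟩ K ⟨-, hK⟩ h
    obtain ⟨z, hz⟩ := hIne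
    obtain ⟨z', hz'⟩ := hI'ne
    rcases hJ with ⟨hJ, hJI⟩ | hJ <;> rcases hK with ⟨hK, hKI⟩ | hK
    · exact hdis (hK (h (dual_subset_dual hJ hz'))) hz'
    · exact hJI (carrier_injective (hJ.antisymm (dual_subset_dual (h.trans hK))))
    · exact hKI (carrier_injective (hK.antisymm ((dual_subset_dual hJ).trans h)))
    · exact hdis hz (hK (h (dual_subset_dual hJ hz)))
  have hchain : ∀ c : ℕ → GoodInt, (∀ n, c n ∈ F) →
      (∀ n, (c n).carrier ⊆ (c (n + 1)).carrier) →
      ∃ J ∈ F, J.carrier = ⋃ n, (c n).carrier := by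
    intro c hc hasc
    obtain ⟨J, hJ⟩ := exists_union c hasc _ _ hnuv (fun n => huF _ (hc n)) (fun n => hvF _ (hc n))
    refine ⟨J, ⟨L.chain_closed c (fun n => (hc n).1) hasc J hJ, ?_⟩, hJ⟩
    have hmono : Monotone fun n => (c n).carrier := monotone_nat_of_le_succ hasc
    obtain ⟨z, hz⟩ := carrier_nonempty (c 0)
    rcases (hc 0).2 with h0 | h0
    · left
      have hall : ∀ n, (c n).carrier ⊆ I.carrier ∧ c n ≠ I := fun n =>
        (hc n).2.resolve_right fun h => hdis (h0.1 hz) (h (hmono (Nat.zero_le n) hz))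
      refine ⟨by rw [hJ]; exact iUnion_subset fun n => (hall n).1, ?_⟩
      rintro rfl
      -- If the leaves exhausted `I`, one of them would contain both a point and its translate.
      have hx : ((m : ℝ) : S1) ∈ J.carrier := (A.mem_I ⟨hm.1.le, by linarith [hm.2, A.lt']⟩).2 hm
      have hgx : (((g • (⟨m, hm⟩ : Ioo μ ν) : Ioo μ ν) : ℝ) : S1) ∈ J.carrier := by
        rw [A.act]; exact A.mem_I_map g.2 hx
      rw [hJ] at hx hgx
      obtain ⟨i, hi⟩ := mem_iUnion.1 hx
      obtain ⟨j, hj⟩ := mem_iUnion.1 hgx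
      set k := max i j
      have hi' := hmono (le_max_left i j) hi
      have hj' := hmono (le_max_right i j) hj
      obtain ⟨α, β, g1, g2, g3, ga, gb⟩ := A.inner_coords hnc (hc k).1 (hall k).1 (hall k).2
      have hck := carrier_eq ga gb g2 (by linarith [A.lt'])
      have hmem : ∀ t : Ioo μ ν, ((t : ℝ) : S1) ∈ (c k).carrier → (t : ℝ) ∈ Ioo α β :=
        fun t ht => by
          rw [hck] at ht
          exact (coe_mem_image g1.le (by linarith [A.lt'])
            ⟨t.2.1.le, by linarith [t.2.2, A.lt']⟩).1 ht
      exact A.not_both (hc k).1 g1 g2 g3 ga gb hg (t := ⟨m, hm⟩) (hmem ⟨m, hm⟩ hi').1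
        (hmem _ hj').2
    · right
      rw [hJ]
      exact iUnion_subset fun n => (hc n).2.resolve_left fun h =>
        hdis (h.1 (hmono (Nat.zero_le n) hz)) (h0 hz)
  obtain ⟨Γ, hgap, hΓF, hcont, hmaxi⟩ := exists_gap L F (fun K hK => hK.1) hcov hdual hchain
  obtain ⟨K, hK, ha, hb, hu⟩ : ∃ K ∈ L.mem, K.a ∈ I.carrier ∧ K.b ∈ I.carrier ∧
      (μ : S1) ∉ K.carrier := by
    obtain ⟨K, hK, h⟩ := exists_endpoint L hL I
    have hab : K.a ∈ I.carrier ∧ K.b ∈ I.carrier := by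
      rcases h with h | h
      · exact ⟨h, hnc K hK h⟩
      · exact ⟨hnc K.dual (L.dual_mem K hK) h, h⟩
    by_cases hu : (μ : S1) ∈ K.carrier
    · exact ⟨K.dual, L.dual_mem K hK, hab.2, hab.1, not_mem_dual hu⟩
    · exact ⟨K, hK, hab.1, hab.2, hu⟩
  have hKI := A.subset_of_endpoints ha hb hu
  obtain ⟨M, hM, hKM⟩ := hcont K ⟨hK, Or.inl ⟨hKI, ne_I K ha⟩⟩
  obtain ⟨hMI, hMne⟩ : M.carrier ⊆ I.carrier ∧ M ≠ I := by
    refine (hΓF hM).2.resolve_right fun h => ?_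
    obtain ⟨z, hz⟩ := carrier_nonempty K
    exact hdis (hKI hz) (h (hKM hz))
  obtain ⟨α, β, h1, h2, h3, Ma, Mb⟩ := A.inner_coords hnc (hΓF hM).1 hMI hMne
  set a : Ioo μ ν := ⟨α, h1, h2.trans h3⟩
  -- The whole orbit of the endpoint `α` of `M` consists of vertices of the gap.
  have horb : ∀ h : G, (((h • a : Ioo μ ν) : ℝ) : S1) ∈ gapVerts Γ := by
    intro h hmem
    obtain ⟨N, hN, hzN⟩ := mem_iUnion₂.1 hmem
    have hNF := hΓF hN
    have hzI : (((h • a : Ioo μ ν) : ℝ) : S1) ∈ I.carrier :=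
      (A.mem_I ⟨(h • a).2.1.le, by linarith [(h • a).2.2, A.lt']⟩).2 (h • a).2
    have hNI : N.carrier ⊆ I.carrier ∧ N ≠ I := hNF.2.resolve_right fun h' => hdis hzI (h' hzN)
    have hinv : (h.1)⁻¹ ∈ G := G.inv_mem h.2
    have hN'L := A.map_mem hinv hNF.1
    have hN'c := A.map_carrier hinv N
    have hN'I : (gmap (h.1)⁻¹ N).carrier ⊆ I.carrier := by
      rw [hN'c, ← A.inv _ hinv]; exact image_mono hNI.1
    have hN'ne : gmap (h.1)⁻¹ N ≠ I := by
      intro e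
      apply hNI.2
      apply carrier_injective
      have h' : ⇑((h.1)⁻¹ : Equiv.Perm S1) '' N.carrier =
          ⇑((h.1)⁻¹ : Equiv.Perm S1) '' I.carrier := by
        rw [← hN'c, e, A.inv _ hinv]
      exact ((h.1)⁻¹ : Equiv.Perm S1).injective.image_injective h'
    have haN' : M.a ∈ (gmap (h.1)⁻¹ N).carrier := by
      rw [hN'c]
      refine ⟨_, hzN, ?_⟩
      rw [A.act, Ma]; simp [a]
    rcases unlinked_cases L (hΓF hM).1 hN'L with h' | h' | h' | h'
    · have := hmaxi M hM _ ⟨hN'L, Or.inl ⟨hN'I, hN'ne⟩⟩ h'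
      rw [this] at haN'
      exact a_notMem M haN'
    · exact a_notMem M (h' haN')
    · have hcl : M.a ∈ closure M.carrier :=
        compl_subset_closure_dual M.dual (b_notMem M.dual)
      obtain ⟨w, hw, hw'⟩ := mem_closure_iff.1 hcl _ (isOpen_carrier _) haN'
      exact Set.disjoint_left.1 h' hw' hw
    · exact hdual M (hΓF hM) _ ⟨hN'L, Or.inl ⟨hN'I, hN'ne⟩⟩ h'
  have huΓ : (μ : S1) ∈ gapVerts Γ := fun h => by
    obtain ⟨N, hN, hz⟩ := mem_iUnion₂.1 h
    exact huF N (hΓF hN) hz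
  have hvΓ : (ν : S1) ∈ gapVerts Γ := fun h => by
    obtain ⟨N, hN, hz⟩ := mem_iUnion₂.1 h
    exact hvF N (hΓF hN) hz
  rcases hL Γ hgap with hfin | ⟨t, p, -, htne, hΓ, hverts⟩
  · have hinj : Function.Injective fun k : ℤ => (((g ^ k • a : Ioo μ ν) : ℝ) : S1) := by
      intro i j hij
      apply (A.free.strictMono_zpow (hg a)).injective
      apply Subtype.ext
      have hmem : ∀ x : Ioo μ ν, (x : ℝ) ∈ Ico μ (μ + 1) := fun x =>
        ⟨x.2.1.le, by linarith [x.2.2, A.lt']⟩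
      exact coe_inj_Ico (hmem _) (hmem _) hij
    refine Set.infinite_range_of_injective hinj (hfin.subset ?_)
    rintro _ ⟨k, rfl⟩
    exact horb _
  · rw [hverts] at huΓ hvΓ
    have hcase : (∃ k, t k = (μ : S1)) ∨ ∃ k, t k = (ν : S1) := by
      rcases huΓ with h | h
      · exact Or.inl h
      · rcases hvΓ with h' | h'
        · exact Or.inr h'
        · rw [mem_singleton_iff] at h h'
          exact absurd (h'.trans h.symm) hnuv
    -- An end of `I` which is a tip of the crown has a side of the crown next to it, but the orbit
    -- of `α` enters every neighbourhood of both ends.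
    have hI01 : ∀ x : Ioo μ ν, (x : ℝ) ∈ Icc μ (μ + 1) := fun x =>
      ⟨x.2.1.le, by linarith [x.2.2, A.lt']⟩
    rcases hcase with ⟨k, hk⟩ | ⟨k, hk⟩
    · set N : GoodInt := ⟨t k, t (k + 1), htne k⟩ with hNdef
      have hN : N ∈ Γ := by rw [hΓ]; exact ⟨k, rfl, rfl⟩
      obtain ⟨α', β', g0, g1, g2, g3, ga, gb⟩ := exists_coords μ N (huF N (hΓF hN))
      have hα' : α' = μ := coe_inj_Ico (μ := μ) ⟨g0, by linarith⟩ ⟨le_rfl, by linarith⟩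
        (ga.symm.trans hk)
      obtain ⟨y, hy1, hy2⟩ := exists_between (lt_min (hα' ▸ g1 : μ < β') A.lt)
      obtain ⟨n, hn⟩ := A.free.arch_inv (hg a) ⟨y, hy1, hy2.trans_le (min_le_right _ _)⟩
      have hn' : (((g ^ n)⁻¹ • a : Ioo μ ν) : ℝ) < y := hn
      refine horb (g ^ n)⁻¹ (mem_iUnion₂.2 ⟨N, hN, ?_⟩)
      rw [carrier_eq ga gb g1 g3, coe_mem_image g0 g2 (hI01 _)]
      exact ⟨hα' ▸ ((g ^ n)⁻¹ • a).2.1, hn'.trans (hy2.trans_le (min_le_left _ _))⟩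
    · set N : GoodInt := ⟨t (k - 1), t (k - 1 + 1), htne (k - 1)⟩ with hNdef
      have hN : N ∈ Γ := by rw [hΓ]; exact ⟨k - 1, rfl, rfl⟩
      obtain ⟨α', β', g0, g1, g2, g3, ga, gb⟩ := exists_coords μ N (huF N (hΓF hN))
      have hbν : (β' : S1) = (ν : S1) := by
        rw [← gb, ← hk]; exact congrArg t (sub_add_cancel k 1)
      have hβ1 : β' < μ + 1 := by
        refine lt_of_le_of_ne g2 fun e => hnuv ?_
        rw [← hbν, e]; exact coe_add_one μ
      have hβ' : β' = ν := coe_inj_Ico (μ := μ) ⟨by linarith, hβ1⟩ ⟨A.lt.le, A.lt'⟩ hbν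
      obtain ⟨y, hy1, hy2⟩ := exists_between (max_lt (hβ' ▸ g1 : α' < ν) A.lt)
      obtain ⟨n, hn⟩ := A.free.arch (hg a) ⟨y, (le_max_right _ _).trans_lt hy1, hy2⟩
      have hn' : y < ((g ^ n • a : Ioo μ ν) : ℝ) := hn
      refine horb (g ^ n) (mem_iUnion₂.2 ⟨N, hN, ?_⟩)
      rw [carrier_eq ga gb g1 g3, coe_mem_image g0 g2 (hI01 _)]
      exact ⟨((le_max_left _ _).trans_lt hy1).trans hn', hβ' ▸ (g ^ n • a).2.2⟩

end Acts

/-- The subgroup `G` acts on the real interval parametrizing `I`. -/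
lemma exists_action (G : Subgroup (Equiv.Perm S1)) (I : GoodInt)
    (hpos : ∀ g ∈ G, PosHomeo g)
    (hinv : ∀ g ∈ G, ⇑g '' I.carrier = I.carrier)
    (hfree : ∀ g ∈ G, g ≠ 1 → ∀ x ∈ I.carrier, g x ≠ x) :
    ∃ (μ ν : ℝ) (_ : MulAction G (Ioo μ ν)), μ < ν ∧ ν < μ + 1 ∧ I.a = (μ : S1) ∧
      I.b = (ν : S1) ∧
      (∀ (g : G) (t : Ioo μ ν), (((g • t : Ioo μ ν) : ℝ) : S1) = g.1 ((t : ℝ) : S1)) ∧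
      FreeOrderAction G (Ioo μ ν) := by
  obtain ⟨μ, ν, h1, h2, ha, hb⟩ := exists_coords_self I
  have hI := carrier_eq ha hb h1 h2
  have hmemI : ∀ t : Ioo μ ν, ((t : ℝ) : S1) ∈ I.carrier := fun t => by
    rw [hI]; exact ⟨t, t.2, rfl⟩
  have hinj : ∀ s t : Ioo μ ν, ((s : ℝ) : S1) = ((t : ℝ) : S1) → s = t := fun s t h =>
    Subtype.ext (coe_inj_Ico (μ := μ) ⟨s.2.1.le, by linarith [s.2.2]⟩
      ⟨t.2.1.le, by linarith [t.2.2]⟩ h)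
  have hex : ∀ (g : G) (t : Ioo μ ν), ∃ s : Ioo μ ν, ((s : ℝ) : S1) = g.1 ((t : ℝ) : S1) := by
    intro g t
    have h : g.1 ((t : ℝ) : S1) ∈ I.carrier := by
      rw [← hinv g g.2]; exact mem_image_of_mem _ (hmemI t)
    rw [hI] at h
    obtain ⟨s, hs, hst⟩ := h
    exact ⟨⟨s, hs⟩, hst⟩
  choose f hf using hex
  let act : MulAction G (Ioo μ ν) :=
    { smul := f
      one_smul := fun t => hinj _ _ (hf 1 t)
      mul_smul := fun g h t => hinj _ _ <| by
        change ((f (g * h) t : ℝ) : S1) = ((f g (f h t) : ℝ) : S1)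
        rw [hf, hf, hf]; rfl }
  have hact : ∀ (g : G) (t : Ioo μ ν),
      (((g • t : Ioo μ ν) : ℝ) : S1) = g.1 ((t : ℝ) : S1) := hf
  refine ⟨μ, ν, act, h1, h2, ha, hb, hact, ?_, ?_, ?_⟩
  · rintro S ⟨s, hs⟩ ⟨B, hB⟩
    have hlub : IsLUB (Subtype.val '' S) (sSup (Subtype.val '' S)) :=
      isLUB_csSup ⟨_, s, hs, rfl⟩ ⟨B, by rintro _ ⟨t, ht, rfl⟩; exact hB ht⟩
    refine ⟨⟨sSup (Subtype.val '' S), s.2.1.trans_le (hlub.1 ⟨s, hs, rfl⟩),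
      (hlub.2 (by rintro _ ⟨t, ht, rfl⟩; exact hB ht)).trans_lt B.2.2⟩, ?_, ?_⟩
    · intro t ht; exact hlub.1 ⟨t, ht, rfl⟩
    · intro b hb; exact hlub.2 (by rintro _ ⟨t, ht, rfl⟩; exact hb ht)
  · intro g s t hst
    -- `g` fixes the initial endpoint of `I`, and the order of `(μ, ν)` is the circular order of
    -- triples starting at that endpoint.
    have hgI : gmap g.1 I = I := by
      apply carrier_injective
      rw [gmap_carrier (hpos _ g.2) (hpos _ (G.inv_mem g.2)), hinv _ g.2]
    have hgμ : g.1 (μ : S1) = (μ : S1) := by rw [← ha]; exact congrArg GoodInt.a hgI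
    have hord : ∀ s t : Ioo μ ν,
        sbtw (μ : S1) ((s : ℝ) : S1) ((t : ℝ) : S1) ↔ s < t := by
      intro s t
      rw [sbtw_coe_iff t.2.1 (by linarith [t.2.2])]
      have := coe_mem_image (μ := μ) (α := μ) (β := t) (t := s) le_rfl (by linarith [t.2.2])
        ⟨s.2.1.le, by linarith [s.2.2]⟩
      rw [mem_image] at this
      rw [this]
      exact ⟨fun h => h.2, fun h => ⟨s.2.1, h⟩⟩
    have h3 := (hpos _ g.2).2.2 _ _ _ ((hord s t).2 hst)
    rw [hgμ, ← hact, ← hact] at h3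
    exact (hord _ _).1 h3
  · intro g hg t h
    refine hfree g g.2 (fun e => hg (Subtype.ext e)) _ (hmemI t) ?_
    rw [← hact, h]

/-- a nontrivial subgroup of the automorphism group of a
pseudo-fibered pair preserving a good open interval and acting freely on it
is infinite cyclic, generated by an element without fixed points in the
interval. -/
theorem statement16 (L1 L2 : LamSys) (hpf : PseudoFibered L1 L2)
    (G : Subgroup (Equiv.Perm S1)) (hG : ∀ g ∈ G, L1.InAut g ∧ L2.InAut g)
    (hGne : G ≠ ⊥) (I : GoodInt)
    (hinv : ∀ g ∈ G, ⇑g '' I.carrier = I.carrier)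
    (hfree : ∀ g ∈ G, g ≠ 1 → ∀ x ∈ I.carrier, g x ≠ x) :
    ∃ g : Equiv.Perm S1, g ∈ G ∧ G = Subgroup.zpowers g ∧ ¬ IsOfFinOrder g ∧
      ∀ x ∈ I.carrier, g x ≠ x := by
  obtain ⟨μ, ν, _, h1, h2, ha, hb, hact, hF⟩ :=
    exists_action G I (fun g hg => (hG g hg).1.1) hinv hfree
  have A1 : Acts L1 G I μ ν := ⟨fun g hg => (hG g hg).1, h1, h2, ha, hb, hinv, hact, hF⟩
  have A2 : Acts L2 G I μ ν := ⟨fun g hg => (hG g hg).2, h1, h2, ha, hb, hinv, hact, hF⟩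
  have hne : ∃ g : G, g ≠ 1 := Subgroup.ne_bot_iff_exists_ne_one.1 hGne
  obtain ⟨m, hm⟩ := exists_between h1
  have : Nonempty (Ioo μ ν) := ⟨⟨m, hm⟩⟩
  rcases hF.cyclic_or_common_limit hne with ⟨g, hg1, hgen⟩ | ⟨l, hl⟩
  · have hg1' : g.1 ≠ 1 := fun e => hg1 (Subtype.ext e)
    refine ⟨g.1, g.2, ?_, ?_, hfree g.1 g.2 hg1'⟩
    · refine le_antisymm (fun h hh => ?_) (by simp)
      obtain ⟨k, hk⟩ := hgen ⟨h, hh⟩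
      exact ⟨k, congrArg Subtype.val hk⟩
    · intro hfin
      obtain ⟨h, hh⟩ := A1.exists_pos hne ⟨m, hm⟩
      obtain ⟨k, hk⟩ := hgen h
      have hk : g ^ k = h := hk
      obtain ⟨n, hn, hgn⟩ := isOfFinOrder_iff_pow_eq_one.1 hfin
      have hgn' : g ^ n = 1 := Subtype.ext hgn
      -- Replacing `g` by a positive element `h` of `G` makes its powers strictly increasing.
      have hhn : h ^ (n : ℤ) = 1 := by
        rw [← hk, ← zpow_mul, mul_comm, zpow_mul, zpow_natCast, hgn', one_zpow]
      have := hF.strictMono_zpow (hh ⟨m, hm⟩) (by exact_mod_cast hn : (0 : ℤ) < n)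
      simp only [hhn, zpow_zero] at this
      exact lt_irrefl _ this
  · obtain ⟨K1, hK1, h1a, h1b⟩ := A1.exists_crossing hpf.qf1 hne
    obtain ⟨K2, hK2, h2a, h2b⟩ := A2.exists_crossing hpf.qf2 hne
    have : ((l : ℝ) : S1) ∈ L1.E ∩ L2.E :=
      ⟨A1.mem_E_of_crossing hK1 h1a h1b hl, A2.mem_E_of_crossing hK2 h2a h2b hl⟩
    rw [hpf.transverse] at this
    exact absurd this (notMem_empty _)

end Veering
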